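/- arXiv:2401.00351 — 6 statements merged into one kernel-verified Lean document; each statement's English description precedes it below -/
import Mathlib

section
/- Fix integers p, m ≥ 0 with p + m ≥ 1 and bounds L, M ∈ ℕ. For each n, let A_n ∈ 𝔇(p, m, n) be a matrix with all entries at most L, and let β_n = (β_{n,1}, …, β_{n,n}) be a vector of nonnegative integers with all entries at most M, such that Σ_{j=1}^n β_{n,j} is even and the number s_n of indices j ∈ {1, …, n} with β_{n,j} ≠ (deg A_n)_j satisfies s_n = o(n). Then for every sufficiently large n there exists A'_n ∈ 𝔇(p, m, n) such that deg A'_n = β_n, all entries of A'_n are at most M, and the number of columns in which A'_n differs from A_n is o(n) as n → ∞. -/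
/-!
Row sums allowed in `𝔇(p, m, n)` are given by arbitrary vectors of `p + m` numbers: half the sum of
each single row and the common sum of each pair of rows. So any even total `N` is the sum of allowed
row sums which fall short of those of `A` only by as much as the totals force, and it remains to
modify `A` so that it has these row sums and column sums `β`.

Delete the columns of `A` whose column sums are wrong, and lower entries in the other columns until
no row sum is too large. The deficits in the row sums and in the column sums then have equal totals,
so they are the margins of a nonnegative integer matrix, which is added. A column with correct sum
and no lowered entry has no deficit and stays as it is, and entries are lowered by no more than the
excess `∑ deg A - ∑ β` in total.
-/

open Filter

/-- The set `𝔇(p, m, n)`: `(p + 2m) × n` matrices with nonnegative integer entries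
(rows indexed by `Fin (p + 2m)`, 0-based: rows `0, …, p-1` are the first `p` rows)
such that each of the first `p` row sums is even, and for each `k < m` the row sums
of rows `p + 2k` and `p + 2k + 1` coincide. -/
def memD (p m n : ℕ) (A : Fin (p + 2 * m) → Fin n → ℕ) : Prop :=
  (∀ i : ℕ, (hi : i < p) → Even (∑ j, A ⟨i, by omega⟩ j)) ∧
  (∀ k : ℕ, (hk : k < m) →
    ∑ j, A ⟨p + 2 * k, by omega⟩ j = ∑ j, A ⟨p + 2 * k + 1, by omega⟩ j)

/-- The `j`-th column sum of a matrix, i.e. `(deg A)_j`. -/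
def colSum {r n : ℕ} (A : Fin r → Fin n → ℕ) (j : Fin n) : ℕ := ∑ i, A i j

section Margins

open scoped Finset

variable {ι κ : Type*} [Fintype ι] [Fintype κ]

lemma exists_le_sum_eq (f : ι → ℕ) {N : ℕ} (hN : N ≤ ∑ i, f i) :
    ∃ g ≤ f, ∑ i, g i = N := by
  obtain ⟨g, hgf, hg⟩ := (Finsupp.equivFunOnFinite.symm f).exists_le_degree_eq N
    (by simpa [Finsupp.degree_eq_sum] using hN)
  exact ⟨g, hgf, by rw [← hg, Finsupp.degree_eq_sum]⟩

lemma exists_sum_eq_and_sum_tsub_eq [Nonempty ι] (f : ι → ℕ) (N : ℕ) :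
    ∃ g : ι → ℕ, ∑ i, g i = N ∧ ∑ i, (f i - g i) = ∑ i, f i - N := by
  classical
  obtain hN | hN := le_total N (∑ i, f i)
  · obtain ⟨g, hgf, rfl⟩ := exists_le_sum_eq f hN
    exact ⟨g, rfl, Finset.sum_tsub_distrib _ fun i _ => hgf i⟩
  · let i₀ : ι := Classical.arbitrary ι
    refine ⟨f + Pi.single i₀ (N - ∑ i, f i), ?_, ?_⟩
    · simp [Finset.sum_add_distrib, hN]
    · simp [Nat.sub_eq_zero_of_le hN]

lemma exists_rowSum_eq_colSum_eq (r : ι → ℕ) (c : κ → ℕ) (h : ∑ i, r i = ∑ j, c j) :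
    ∃ D : ι → κ → ℕ, (∀ i, ∑ j, D i j = r i) ∧ ∀ j, ∑ i, D i j = c j := by
  classical
  -- Match `r i` points labelled `i` with `c j` points labelled `j`; `D i j` counts the pairs with
  -- labels `i` and `j`.
  let e : (Σ i, Fin (r i)) ≃ Σ j, Fin (c j) := Fintype.equivOfCardEq (by simpa using h)
  refine ⟨fun i j => ∑ k : Fin (r i), if (e ⟨i, k⟩).1 = j then 1 else 0, fun i => ?_, fun j => ?_⟩
  · rw [Finset.sum_comm]
    simp
  · calc ∑ i, ∑ k : Fin (r i), (if (e ⟨i, k⟩).1 = j then 1 else 0)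
        = ∑ x : Σ i, Fin (r i), if (e x).1 = j then 1 else 0 := by rw [Fintype.sum_sigma]
      _ = ∑ y : Σ j, Fin (c j), if y.1 = j then 1 else 0 :=
        e.sum_comp fun y => if y.1 = j then 1 else 0
      _ = c j := by
        rw [Fintype.sum_sigma, Fintype.sum_eq_single j fun j' hj' => by simp [hj']]
        simp

lemma exists_ge_rowSum_eq_colSum_eq (C : ι → κ → ℕ) (r : ι → ℕ) (c : κ → ℕ)
    (hr : ∀ i, ∑ j, C i j ≤ r i) (hc : ∀ j, ∑ i, C i j ≤ c j) (h : ∑ i, r i = ∑ j, c j) :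
    ∃ A ≥ C, (∀ i, ∑ j, A i j = r i) ∧ ∀ j, ∑ i, A i j = c j := by
  obtain ⟨D, hDr, hDc⟩ := exists_rowSum_eq_colSum_eq
    (fun i => r i - ∑ j, C i j) (fun j => c j - ∑ i, C i j) (by
      rw [Finset.sum_tsub_distrib _ fun i _ => hr i, Finset.sum_tsub_distrib _ fun j _ => hc j, h,
        Finset.sum_comm])
  refine ⟨C + D, le_self_add, fun i => ?_, fun j => ?_⟩
  · simp only [Pi.add_apply, Finset.sum_add_distrib, hDr, Nat.add_sub_cancel' (hr i)]
  · simp only [Pi.add_apply, Finset.sum_add_distrib, hDc, Nat.add_sub_cancel' (hc j)]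

lemma card_col_ne_le_sum_tsub {A C : ι → κ → ℕ} (hCA : C ≤ A) :
    #{j | ∃ i, C i j ≠ A i j} ≤ ∑ i, ∑ j, (A i j - C i j) := by
  rw [Finset.sum_comm, Finset.card_filter]
  refine Finset.sum_le_sum fun j _ => ?_
  split_ifs with hj
  · obtain ⟨i, hi⟩ := hj
    calc 1 ≤ A i j - C i j := Nat.sub_pos_of_lt ((hCA i j).lt_of_ne hi)
      _ ≤ ∑ i, (A i j - C i j) :=
        Finset.single_le_sum (f := fun i => A i j - C i j) (fun _ _ => Nat.zero_le _)
          (Finset.mem_univ i)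
  · exact Nat.zero_le _

lemma exists_le_rowSum_le (A : ι → κ → ℕ) (r : ι → ℕ) :
    ∃ C ≤ A, (∀ i, ∑ j, C i j ≤ r i) ∧
      #{j | ∃ i, C i j ≠ A i j} ≤ ∑ i, (∑ j, A i j - r i) := by
  choose C hCA hC using fun i => exists_le_sum_eq (A i) (min_le_left (∑ j, A i j) (r i))
  refine ⟨C, hCA, fun i => (hC i).trans_le (min_le_right _ _), ?_⟩
  refine (card_col_ne_le_sum_tsub hCA).trans_eq (Finset.sum_congr rfl fun i _ => ?_)
  rw [Finset.sum_tsub_distrib _ fun j _ => hCA i j, hC, tsub_min]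

theorem exists_rowSum_eq_colSum_eq_card_col_ne_le (A : ι → κ → ℕ) (r : ι → ℕ) (c : κ → ℕ)
    (h : ∑ i, r i = ∑ j, c j) :
    ∃ A' : ι → κ → ℕ, (∀ i, ∑ j, A' i j = r i) ∧ (∀ j, ∑ i, A' i j = c j) ∧
      #{j | ∃ i, A' i j ≠ A i j} ≤
        #{j | c j ≠ ∑ i, A i j} + ∑ i, (∑ j, A i j - r i) := by
  classical
  let A₀ : ι → κ → ℕ := fun i j => if c j = ∑ i, A i j then A i j else 0
  have A₀_le : A₀ ≤ A := fun i j => by dsimp only [A₀]; split_ifs <;> simp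
  have colSum_A₀_le (j : κ) : ∑ i, A₀ i j ≤ c j := by
    by_cases hj : c j = ∑ i, A i j <;> simp [A₀, hj]
  obtain ⟨C, hCA₀, hCr, hCcard⟩ := exists_le_rowSum_le A₀ r
  have hCc (j : κ) : ∑ i, C i j ≤ c j :=
    (Finset.sum_le_sum fun i _ => hCA₀ i j).trans (colSum_A₀_le j)
  obtain ⟨A', hCA', hr, hc⟩ := exists_ge_rowSum_eq_colSum_eq C r c hCr hCc h
  refine ⟨A', hr, hc, ?_⟩
  have ne_subset : ({j | ∃ i, A' i j ≠ A i j} : Finset κ) ⊆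
      ({j | c j ≠ ∑ i, A i j} : Finset κ) ∪ ({j | ∃ i, C i j ≠ A₀ i j} : Finset κ) := by
    intro j
    simp only [Finset.mem_union, Finset.mem_filter_univ]
    contrapose!
    rintro ⟨hj, hCj⟩ i
    have hCA (i : ι) : C i j = A i j := by rw [hCj i]; exact if_pos hj
    -- On column `j` we have `A' ≥ C = A`, so equality of the column sums forces `A' = A` there.
    have hsum : ∑ i, A i j = ∑ i, A' i j := by rw [hc, hj]
    exact ((Finset.sum_eq_sum_iff_of_le fun i _ => hCA i ▸ hCA' i j).1 hsum i
      (Finset.mem_univ i)).symm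
  calc #{j | ∃ i, A' i j ≠ A i j}
      ≤ #{j | c j ≠ ∑ i, A i j} + #{j | ∃ i, C i j ≠ A₀ i j} :=
        (Finset.card_le_card ne_subset).trans (Finset.card_union_le _ _)
    _ ≤ #{j | c j ≠ ∑ i, A i j} + ∑ i, (∑ j, A₀ i j - r i) := by gcongr
    _ ≤ #{j | c j ≠ ∑ i, A i j} + ∑ i, (∑ j, A i j - r i) := by
        gcongr with i _ j _
        exact A₀_le i j

lemma sum_tsub_sum_le_mul_card_ne {f g : κ → ℕ} {K : ℕ} (hf : ∀ j, f j ≤ K) :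
    ∑ j, f j - ∑ j, g j ≤ K * #{j | g j ≠ f j} := by
  rw [tsub_le_iff_left, mul_comm, ← smul_eq_mul, ← Finset.sum_const, Finset.sum_filter,
    ← Finset.sum_add_distrib]
  refine Finset.sum_le_sum fun j _ => ?_
  have := hf j
  split_ifs <;> omega

end Margins

section BalancedRows

open scoped Finset

variable {p m n : ℕ}

/-- The rows of a matrix in `𝔇(p, m, n)` as `p` single rows and `m` pairs of rows, the pair `k`
consisting of the rows `p + 2k` and `p + 2k + 1`. -/
def rowEquiv (p m : ℕ) : Fin p ⊕ Fin m × Fin 2 ≃ Fin (p + 2 * m) :=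
  ((Equiv.refl _).sumCongr (finProdFinEquiv.trans (finCongr (mul_comm m 2)))).trans finSumFinEquiv

lemma rowEquiv_inl (i : Fin p) :
    rowEquiv p m (.inl i) = ⟨i, by omega⟩ := rfl

lemma rowEquiv_inr_zero (k : Fin m) :
    rowEquiv p m (.inr (k, 0)) = ⟨p + 2 * k, by omega⟩ := by
  ext; simp [rowEquiv]

lemma rowEquiv_inr_one (k : Fin m) :
    rowEquiv p m (.inr (k, 1)) = ⟨p + 2 * k + 1, by omega⟩ := by
  ext; simp [rowEquiv, add_assoc, add_comm 1]

/-- The vector with entry `2 * h (.inl i)` in the single row `i` and entry `h (.inr k)` in both rows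
of the pair `k`. These are exactly the row sums allowed by the definition of `𝔇(p, m, n)`. -/
def balancedRows (h : Fin p ⊕ Fin m → ℕ) (i : Fin (p + 2 * m)) : ℕ :=
  Sum.elim (fun i => 2 * h (.inl i)) (fun kb => h (.inr kb.1)) ((rowEquiv p m).symm i)

lemma balancedRows_tsub (h h' : Fin p ⊕ Fin m → ℕ) (i : Fin (p + 2 * m)) :
    balancedRows h i - balancedRows h' i = balancedRows (h - h') i := by
  unfold balancedRows
  cases (rowEquiv p m).symm i <;> simp [Nat.mul_sub]

lemma sum_balancedRows (h : Fin p ⊕ Fin m → ℕ) : ∑ i, balancedRows h i = 2 * ∑ g, h g := by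
  simp only [balancedRows, Equiv.sum_comp, Fintype.sum_sum_type, Fintype.sum_prod_type,
    Sum.elim_inl, Sum.elim_inr, Fin.sum_univ_two, two_mul, Finset.sum_add_distrib]
  ring

lemma memD_iff_rowEquiv {A : Fin (p + 2 * m) → Fin n → ℕ} :
    memD p m n A ↔ (∀ i, Even (∑ j, A (rowEquiv p m (.inl i)) j)) ∧
      ∀ k, ∑ j, A (rowEquiv p m (.inr (k, 0))) j = ∑ j, A (rowEquiv p m (.inr (k, 1))) j := by
  simp only [memD, Fin.forall_iff, rowEquiv_inl, rowEquiv_inr_zero, rowEquiv_inr_one]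

lemma memD_iff_rowSum_eq_balancedRows {A : Fin (p + 2 * m) → Fin n → ℕ} :
    memD p m n A ↔ ∃ h : Fin p ⊕ Fin m → ℕ, ∀ i, ∑ j, A i j = balancedRows h i := by
  simp only [memD_iff_rowEquiv, ← (rowEquiv p m).forall_congr_right, Sum.forall, Prod.forall,
    Fin.forall_fin_two, balancedRows, Equiv.symm_apply_apply, Sum.elim_inl, Sum.elim_inr]
  constructor
  · rintro ⟨heven, hpair⟩
    choose half hhalf using fun i => (heven i).exists_two_nsmul
    exact ⟨Sum.elim half fun k => ∑ j, A (rowEquiv p m (.inr (k, 0))) j,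
      hhalf, fun k => ⟨rfl, (hpair k).symm⟩⟩
  · rintro ⟨h, hsingle, hpair⟩
    exact ⟨fun i => hsingle i ▸ even_two_mul _, fun k => (hpair k).1.trans (hpair k).2.symm⟩

theorem exists_memD_colSum_eq_card_col_ne_le (hpm : 1 ≤ p + m)
    {A : Fin (p + 2 * m) → Fin n → ℕ} (hA : memD p m n A) {β : Fin n → ℕ}
    (hβ : Even (∑ j, β j)) :
    ∃ A' : Fin (p + 2 * m) → Fin n → ℕ, (memD p m n A' ∧ ∀ j, colSum A' j = β j) ∧
      #{j | ∃ i, A' i j ≠ A i j} ≤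
        #{j | β j ≠ colSum A j} + (∑ j, colSum A j - ∑ j, β j) := by
  obtain ⟨h, hh⟩ := memD_iff_rowSum_eq_balancedRows.1 hA
  obtain ⟨N, hN⟩ := hβ.exists_two_nsmul
  have : Nonempty (Fin p ⊕ Fin m) := by
    rw [← Fintype.card_pos_iff, Fintype.card_sum, Fintype.card_fin, Fintype.card_fin]
    exact hpm
  obtain ⟨h', hsum, htsub⟩ := exists_sum_eq_and_sum_tsub_eq h N
  obtain ⟨A', hr, hc, hcard⟩ := exists_rowSum_eq_colSum_eq_card_col_ne_le A (balancedRows h') β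
    (by rw [sum_balancedRows, hsum, hN, smul_eq_mul])
  have hexcess : ∑ i, (∑ j, A i j - balancedRows h' i) = ∑ j, ∑ i, A i j - ∑ j, β j :=
    calc ∑ i, (∑ j, A i j - balancedRows h' i)
        = 2 * ∑ g, (h g - h' g) := by
          simp only [hh, balancedRows_tsub, sum_balancedRows, Pi.sub_apply]
      _ = ∑ i, ∑ j, A i j - ∑ j, β j := by
          simp only [htsub, Nat.mul_sub, hh, sum_balancedRows, hN, smul_eq_mul]
      _ = ∑ j, ∑ i, A i j - ∑ j, β j := by rw [Finset.sum_comm]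
  refine ⟨A', ⟨memD_iff_rowSum_eq_balancedRows.2 ⟨h', hr⟩, hc⟩, ?_⟩
  rw [hexcess] at hcard
  change _ ≤ #{j | β j ≠ ∑ i, A i j} + (∑ j, ∑ i, A i j - ∑ j, β j)
  -- Only the decidability instances differ: that of `∃ i, _` is special for `i : Fin _`.
  convert hcard

end BalancedRows

lemma le_colSum {r n : ℕ} (A : Fin r → Fin n → ℕ) (i : Fin r) (j : Fin n) : A i j ≤ colSum A j :=
  Finset.single_le_sum (f := fun i => A i j) (fun _ _ => Nat.zero_le _) (Finset.mem_univ i)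

lemma colSum_le {r n L : ℕ} {A : Fin r → Fin n → ℕ} (hA : ∀ i j, A i j ≤ L) (j : Fin n) :
    colSum A j ≤ r * L := by
  simpa [colSum] using Finset.sum_le_card_nsmul Finset.univ (A · j) L fun i _ => hA i j

lemma tendsto_excess_div_of_le {r L : ℕ} {A : (n : ℕ) → Fin r → Fin n → ℕ}
    {β : (n : ℕ) → Fin n → ℕ} (hAL : ∀ n i j, A n i j ≤ L)
    (hs : Tendsto
      (fun n => ((Finset.univ.filter fun j : Fin n => β n j ≠ colSum (A n) j).card : ℝ) / n)
      atTop (nhds 0)) :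
    Tendsto (fun n => ((∑ j, colSum (A n) j - ∑ j, β n j : ℕ) : ℝ) / n) atTop (nhds 0) := by
  have hlim := hs.const_mul ((r * L : ℕ) : ℝ)
  rw [mul_zero] at hlim
  refine squeeze_zero (fun n => by positivity) (fun n => ?_) hlim
  rw [← mul_div_assoc]
  gcongr
  exact_mod_cast sum_tsub_sum_le_mul_card_ne (colSum_le (hAL n))

/-- The difference in `hexcess` is truncated: only an excess of `∑ deg A` over `∑ β` counts. -/
theorem colored_degree_modification_general (p m : ℕ) (hpm : 1 ≤ p + m)
    (A : (n : ℕ) → Fin (p + 2 * m) → Fin n → ℕ)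
    (β : (n : ℕ) → Fin n → ℕ)
    (hA : ∀ n, memD p m n (A n))
    (hβeven : ∀ n, Even (∑ j, β n j))
    (hs : Tendsto
      (fun n => ((Finset.univ.filter fun j : Fin n => β n j ≠ colSum (A n) j).card : ℝ) / n)
      atTop (nhds 0))
    (hexcess : Tendsto (fun n => ((∑ j, colSum (A n) j - ∑ j, β n j : ℕ) : ℝ) / n)
      atTop (nhds 0)) :
    ∃ A' : (n : ℕ) → Fin (p + 2 * m) → Fin n → ℕ,
      (∀ n, memD p m n (A' n) ∧ ∀ j, colSum (A' n) j = β n j) ∧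
      Tendsto
        (fun n => ((Finset.univ.filter fun j : Fin n => ∃ i, A' n i j ≠ A n i j).card : ℝ) / n)
        atTop (nhds 0) := by
  choose A' hA' hcard using fun n =>
    exists_memD_colSum_eq_card_col_ne_le hpm (hA n) (hβeven n)
  refine ⟨A', hA', ?_⟩
  have hlim := hs.add hexcess
  rw [add_zero] at hlim
  refine squeeze_zero (fun n => by positivity) (fun n => ?_) hlim
  rw [← add_div]
  gcongr
  exact_mod_cast hcard n

/-- **Modification of colored degree matrices (general case).**
Given `A_n ∈ 𝔇(p, m, n)` with entries at most `L` and target column sums `β_n` with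
entries at most `M`, even total sum, disagreeing with `deg A_n` in only `o(n)` columns,
one can find, for all sufficiently large `n`, a matrix `A'_n ∈ 𝔇(p, m, n)` with
`deg A'_n = β_n`, entries at most `M`, differing from `A_n` in only `o(n)` columns. -/
theorem colored_degree_modification (p m L M : ℕ) (hpm : 1 ≤ p + m)
    (A : (n : ℕ) → Fin (p + 2 * m) → Fin n → ℕ)
    (β : (n : ℕ) → Fin n → ℕ)
    (hA : ∀ n, memD p m n (A n))
    (hAL : ∀ n i j, A n i j ≤ L)
    (hβM : ∀ n j, β n j ≤ M)
    (hβeven : ∀ n, Even (∑ j, β n j))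
    (hs : Tendsto
      (fun n => ((Finset.univ.filter fun j : Fin n => β n j ≠ colSum (A n) j).card : ℝ) / n)
      atTop (nhds 0)) :
    ∃ A' : (n : ℕ) → Fin (p + 2 * m) → Fin n → ℕ,
      (∀ᶠ n in atTop,
        memD p m n (A' n) ∧ (∀ j, colSum (A' n) j = β n j) ∧ ∀ i j, A' n i j ≤ M) ∧
      Tendsto
        (fun n => ((Finset.univ.filter fun j : Fin n => ∃ i, A' n i j ≠ A n i j).card : ℝ) / n)
        atTop (nhds 0) := by
  obtain ⟨A', hA', hlim⟩ := colored_degree_modification_general p m hpm A β hA hβeven hs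
    (tendsto_excess_div_of_le hAL hs)
  exact ⟨A', .of_forall fun n => ⟨(hA' n).1, (hA' n).2, fun i j =>
    (le_colSum (A' n) i j).trans ((hA' n).2 j ▸ hβM n j)⟩, hlim⟩
end

section
/- Fix bounds L, M ∈ ℕ. For each n, let A_n be a 2 × n matrix with nonnegative integer entries at most L whose two row sums are equal, and let β_n = (β_{n,1}, …, β_{n,n}) be a vector of nonnegative integers with all entries at most M, such that Σ_{j=1}^n β_{n,j} is even and the number of indices j with β_{n,j} different from the j-th column sum of A_n is o(n). Then for every sufficiently large n there exists a 2 × n matrix A'_n with nonnegative integer entries whose two row sums are equal, whose j-th column sum equals β_{n,j} for every j ∈ {1, …, n}, whose entries are all at most M, and which differs from A_n in only o(n) columns as n → ∞. -/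
open Filter

/-!
In the defective columns, those whose sum in `A` is not `b j`, replace the top entry by `b j / 2`;
in the others keep it. If the two entries of `A` in every defective column differ by at most `L`,
such a column shifts the difference of the row sums by at most `L + 1`, so twice the sum of the new
top row `x ≤ b` misses `∑ j, b j` by at most `L + 1` per defective column. Moving `x` monotonically,
towards `b` or towards `0`, until its sum is right changes at most one entry per unit of the error,
and the bottom row is what remains of `b`.
-/

section AbsSum

open Finset

lemma abs_sum_le_card_filter_nsmul {ι G : Type*} [Fintype ι] [AddCommGroup G] [LinearOrder G]
    [IsOrderedAddMonoid G] {p : ι → Prop} [DecidablePred p] {f : ι → G} {C : G}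
    (hp : ∀ j, p j → |f j| ≤ C) (hnp : ∀ j, ¬ p j → f j = 0) :
    |∑ j, f j| ≤ #{j | p j} • C := by
  have hsupp : ∑ j with p j, f j = ∑ j, f j :=
    sum_filter_of_ne fun j _ hj ↦ not_not.1 (mt (hnp j) hj)
  calc |∑ j, f j| ≤ ∑ j with p j, |f j| := hsupp ▸ abs_sum_le_sum_abs _ _
    _ ≤ #{j | p j} • C := sum_le_card_nsmul _ _ _ fun j hj ↦ hp j (mem_filter.1 hj).2

end AbsSum

section SumAdjustment

open Finset

variable {ι : Type*} [Fintype ι] {x y b : ι → ℕ} {T : ℕ}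

lemma exists_mem_Icc_sum_eq (hxb : x ≤ b) (hT : T ∈ Set.Icc (∑ j, x j) (∑ j, b j)) :
    ∃ y ∈ Set.Icc x b, ∑ j, y j = T := by
  classical
  obtain ⟨hxT, hTb⟩ := hT
  induction T, hxT using Nat.le_induction with
  | base => exact ⟨x, ⟨le_rfl, hxb⟩, rfl⟩
  | succ T _ ih =>
    obtain ⟨y, ⟨hxy, hyb⟩, rfl⟩ := ih (by omega)
    obtain ⟨j, -, hj⟩ := exists_lt_of_sum_lt (Nat.lt_of_succ_le hTb)
    refine ⟨y + Pi.single j 1, ⟨hxy.trans le_self_add, fun i ↦ ?_⟩, by simp [sum_add_distrib]⟩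
    obtain rfl | hij := eq_or_ne i j
    · simpa using hj
    · simpa [hij] using hyb i

lemma card_filter_ne_add_sum_le_sum (hxy : x ≤ y) :
    #{j | y j ≠ x j} + ∑ j, x j ≤ ∑ j, y j := by
  rw [card_filter, ← sum_add_distrib]
  gcongr with j
  have hj : x j ≤ y j := hxy j
  split_ifs <;> omega

lemma exists_le_sum_eq_card_filter_ne_le (hxb : x ≤ b) (hT : T ≤ ∑ j, b j) :
    ∃ y ≤ b, ∑ j, y j = T ∧ (#{j | y j ≠ x j} : ℤ) ≤ |∑ j, (x j : ℤ) - T| := by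
  simp only [← Nat.cast_sum]
  rcases le_total (∑ j, x j) T with hxT | hTx
  · obtain ⟨y, ⟨hxy, hyb⟩, rfl⟩ := exists_mem_Icc_sum_eq hxb ⟨hxT, hT⟩
    have hcard := card_filter_ne_add_sum_le_sum hxy
    exact ⟨y, hyb, rfl, le_abs.2 (by omega)⟩
  · obtain ⟨y, ⟨-, hyx⟩, rfl⟩ := exists_mem_Icc_sum_eq (x := 0) (b := x) zero_le ⟨by simp, hTx⟩
    have hcard : #{j | y j ≠ x j} + ∑ j, y j ≤ ∑ j, x j := by
      simpa only [ne_comm] using card_filter_ne_add_sum_le_sum hyx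
    exact ⟨y, hyx.trans hxb, rfl, le_abs.2 (by omega)⟩

end SumAdjustment

section TwoRows

open Finset

variable {ι : Type*} {L : ℕ} {A : Fin 2 → ι → ℕ} {b : ι → ℕ}

/-- A first guess for the top row of a matrix with column sums `b`: that of `A` in the columns where
`A` already has the right sum, and half of the required sum elsewhere. -/
def approxTopRow (A : Fin 2 → ι → ℕ) (b : ι → ℕ) (j : ι) : ℕ :=
  if b j = A 0 j + A 1 j then A 0 j else b j / 2

lemma approxTopRow_le (j : ι) : approxTopRow A b j ≤ b j := by
  rw [approxTopRow]
  split_ifs <;> omega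

variable [Fintype ι]

lemma abs_two_mul_sum_approxTopRow_sub_le (hrow : ∑ j, A 0 j = ∑ j, A 1 j)
    (hL : ∀ j, b j ≠ A 0 j + A 1 j → |(A 0 j : ℤ) - A 1 j| ≤ L) :
    |2 * ∑ j, (approxTopRow A b j : ℤ) - ∑ j, (b j : ℤ)| ≤
      #{j | b j ≠ A 0 j + A 1 j} * (L + 1) := by
  have hshift : 2 * ∑ j, (approxTopRow A b j : ℤ) - ∑ j, (b j : ℤ) =
      ∑ j, (2 * (approxTopRow A b j : ℤ) - b j - (A 0 j - A 1 j)) := by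
    zify at hrow
    simp only [sum_sub_distrib, mul_sum, hrow, sub_self, sub_zero]
  rw [hshift, ← nsmul_eq_mul]
  refine abs_sum_le_card_filter_nsmul (fun j hj ↦ ?_) fun j hj ↦ ?_
  · have hLj := abs_le.1 (hL j hj)
    rw [approxTopRow, if_neg hj, abs_le]
    omega
  · rw [approxTopRow, if_pos (not_not.1 hj)]
    omega

lemma card_changed_columns_le (y : ι → ℕ) :
    #{j | ∃ i, ![y, b - y] i j ≠ A i j} ≤
      #{j | y j ≠ approxTopRow A b j} + #{j | b j ≠ A 0 j + A 1 j} := by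
  classical
  have hchanged (j) (hj : ∃ i, ![y, b - y] i j ≠ A i j) :
      y j ≠ approxTopRow A b j ∨ b j ≠ A 0 j + A 1 j := by
    contrapose! hj
    obtain ⟨hyj, hbj⟩ := hj
    have hy0 : y j = A 0 j := by rw [hyj, approxTopRow, if_pos hbj]
    simp [Fin.forall_fin_two, hy0, hbj]
  calc #{j | ∃ i, ![y, b - y] i j ≠ A i j}
      ≤ #{j | y j ≠ approxTopRow A b j ∨ b j ≠ A 0 j + A 1 j} :=
        card_le_card (monotone_filter_right _ fun j _ ↦ hchanged j)
    _ ≤ #{j | y j ≠ approxTopRow A b j} + #{j | b j ≠ A 0 j + A 1 j} := by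
        rw [filter_or]
        exact card_union_le _ _

theorem two_row_degree_modification_general (hrow : ∑ j, A 0 j = ∑ j, A 1 j)
    (hL : ∀ j, b j ≠ A 0 j + A 1 j → |(A 0 j : ℤ) - A 1 j| ≤ L) (heven : Even (∑ j, b j)) :
    ∃ A' : Fin 2 → ι → ℕ, ∑ j, A' 0 j = ∑ j, A' 1 j ∧ (∀ j, A' 0 j + A' 1 j = b j) ∧
      #{j | ∃ i, A' i j ≠ A i j} ≤ (L + 2) * #{j | b j ≠ A 0 j + A 1 j} := by
  obtain ⟨T, hT⟩ := heven
  obtain ⟨y, hyb, hyT, hy⟩ :=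
    exists_le_sum_eq_card_filter_ne_le (T := T) (b := b) (approxTopRow_le (A := A)) (by omega)
  have hcol : ∀ j, y j + (b - y) j = b j := fun j ↦ Nat.add_sub_of_le (hyb j)
  have hrow_eq : ∑ j, y j = ∑ j, (b - y) j := by
    have hsum : ∑ j, y j + ∑ j, (b - y) j = ∑ j, b j := by simp only [← sum_add_distrib, hcol]
    omega
  have hadjusted : #{j | y j ≠ approxTopRow A b j} ≤ (L + 1) * #{j | b j ≠ A 0 j + A 1 j} := by
    have herror := abs_two_mul_sum_approxTopRow_sub_le hrow hL
    zify at hT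
    rw [hT, ← two_mul, ← mul_sub, abs_mul, abs_two] at herror
    rw [← Nat.cast_le (α := ℤ), Nat.cast_mul, Nat.cast_succ]
    linarith [abs_nonneg (∑ j, (approxTopRow A b j : ℤ) - T)]
  refine ⟨![y, b - y], hrow_eq, hcol, ?_⟩
  calc #{j | ∃ i, ![y, b - y] i j ≠ A i j}
      ≤ #{j | y j ≠ approxTopRow A b j} + #{j | b j ≠ A 0 j + A 1 j} :=
        card_changed_columns_le y
    _ ≤ (L + 1) * #{j | b j ≠ A 0 j + A 1 j} + #{j | b j ≠ A 0 j + A 1 j} := by gcongr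
    _ = (L + 2) * #{j | b j ≠ A 0 j + A 1 j} := by ring

end TwoRows

lemma tendsto_natCast_div_zero_of_le_mul {α : Type*} {l : Filter α} {u v w : α → ℕ} {C : ℕ}
    (hu : Tendsto (fun a ↦ (u a : ℝ) / w a) l (nhds 0)) (hvu : ∀ a, v a ≤ C * u a) :
    Tendsto (fun a ↦ (v a : ℝ) / w a) l (nhds 0) := by
  refine squeeze_zero (fun a ↦ by positivity) (fun a ↦ ?_) (by simpa using hu.const_mul (C : ℝ))
  rw [← mul_div_assoc]
  gcongr
  exact_mod_cast hvu a

/-- **Modification of 2-row degree matrices (the case `p = 0`, `m = 1`).**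
Given `2 × n` matrices `A_n` with entries at most `L` and equal row sums, and target
column sums `β_n` with entries at most `M`, even total sum, and disagreeing with the
column sums of `A_n` in only `o(n)` columns, one can find, for all sufficiently large
`n`, a `2 × n` matrix `A'_n` with equal row sums, column sums `β_n`, entries at most
`M`, differing from `A_n` in only `o(n)` columns. -/
theorem two_row_degree_modification (L M : ℕ)
    (A : (n : ℕ) → Fin 2 → Fin n → ℕ)
    (β : (n : ℕ) → Fin n → ℕ)
    (hArow : ∀ n, ∑ j, A n 0 j = ∑ j, A n 1 j)
    (hAL : ∀ n i j, A n i j ≤ L)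
    (hβM : ∀ n j, β n j ≤ M)
    (hβeven : ∀ n, Even (∑ j, β n j))
    (hs : Tendsto
      (fun n => ((Finset.univ.filter fun j : Fin n => β n j ≠ A n 0 j + A n 1 j).card : ℝ) / n)
      atTop (nhds 0)) :
    ∃ A' : (n : ℕ) → Fin 2 → Fin n → ℕ,
      (∀ᶠ n in atTop,
        (∑ j, A' n 0 j = ∑ j, A' n 1 j) ∧
        (∀ j, A' n 0 j + A' n 1 j = β n j) ∧
        ∀ i j, A' n i j ≤ M) ∧
      Tendsto
        (fun n => ((Finset.univ.filter fun j : Fin n => ∃ i, A' n i j ≠ A n i j).card : ℝ) / n)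
        atTop (nhds 0) := by
  choose A' hrow hcol hcard using fun n ↦ two_row_degree_modification_general (hArow n)
    (fun j _ ↦ abs_sub_le_of_nonneg_of_le (Nat.cast_nonneg _) (mod_cast hAL n 0 j)
      (Nat.cast_nonneg _) (mod_cast hAL n 1 j)) (hβeven n)
  have hle : ∀ n i j, A' n i j ≤ M := fun n ↦ Fin.forall_fin_two.2
    ⟨fun j ↦ le_of_add_le_left ((hcol n j).trans_le (hβM n j)),
      fun j ↦ le_of_add_le_right ((hcol n j).trans_le (hβM n j))⟩
  exact ⟨A', .of_forall fun n ↦ ⟨hrow n, hcol n, hle n⟩,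
    tendsto_natCast_div_zero_of_le_mul hs hcard⟩
end

section
/- Let n ≥ 1 and L, M ∈ ℕ. Let A = (a_{i,j}) be a 2 × n matrix with nonnegative integer entries at most L whose two row sums are equal, and let β = (β_1, …, β_n) be nonnegative integers with all entries at most M and Σ_{j=1}^n β_j even. Let α_j denote the j-th column sum of A, set I = {j : β_j ≠ α_j}, and assume 1 ∉ I. Then there exists a 2 × n matrix B with nonnegative integer entries whose two row sums are equal, which agrees with A on every column outside I ∪ {1}, and whose vector of column sums is (β_1 + r, β_2, …, β_n) for some even integer r with 0 ≤ r ≤ (2L + M)(|I| + 1). -/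
/-!
Let `K` consist of the first column and `I`. With prescribed column sums, a two-row matrix on `K`
attains every pair of row sums of the right total, so its row sums can be given any difference
`d` of the right parity as soon as the total is at least `|d|`. Take for `d` the difference of the
row sums of `A` on `K`, and for `r` the amount by which the total of `β` on `K` falls short of
`|d|`, if it does: then `r ≤ |d| ≤ L * |K|`. The parity is right because `A` and `β` both have
even total and off `K` the column sums of `A` are those of `β`.
-/

open Finset

section ColumnReplacement

variable {ι : Type*}

lemma sum_add_sum_eq_of_eqOn_compl {M : Type*} [AddCommMonoid M] [Fintype ι] {K : Finset ι}
    {f g : ι → M} (h : ∀ j ∉ K, f j = g j) :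
    ∑ j, f j + ∑ j ∈ K, g j = ∑ j, g j + ∑ j ∈ K, f j := by
  classical
  have hcompl : ∑ j ∈ Kᶜ, f j = ∑ j ∈ Kᶜ, g j := sum_congr rfl fun j hj => h j (mem_compl.mp hj)
  rw [← sum_add_sum_compl K f, ← sum_add_sum_compl K g, hcompl]
  ac_rfl

lemma exists_le_sum_eq_s4 (s : Finset ι) (c : ι → ℕ) {x : ℕ} (hx : x ≤ ∑ j ∈ s, c j) :
    ∃ f ≤ c, ∑ j ∈ s, f j = x := by
  classical
  let F : ι →₀ ℕ := Finsupp.indicator s fun j _ => c j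
  have hF : F.degree = ∑ j ∈ s, c j :=
    Finsupp.sum_indicator_index (h := fun _ n => n) c fun _ _ => rfl
  have hFc (j : ι) : F j ≤ c j := by
    rw [Finsupp.indicator_apply]
    split <;> simp
  obtain ⟨g, hgF, hg⟩ := F.exists_le_degree_eq x (hF ▸ hx)
  have hgs : g.support ⊆ s :=
    (Finsupp.support_mono hgF).trans (Finsupp.support_indicator_subset s _)
  refine ⟨g, fun j => (hgF j).trans (hFc j), ?_⟩
  rw [← hg]
  exact (Finsupp.sum_of_support_subset g hgs (fun _ n => n) fun _ _ => rfl).symm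

lemma exists_two_row_matrix_of_sum_eq_add (s : Finset ι) (c : ι → ℕ) {x y : ℕ}
    (h : ∑ j ∈ s, c j = x + y) :
    ∃ C : Fin 2 → ι → ℕ,
      (∀ j, C 0 j + C 1 j = c j) ∧ ∑ j ∈ s, C 0 j = x ∧ ∑ j ∈ s, C 1 j = y := by
  obtain ⟨f, hfc, hfx⟩ := exists_le_sum_eq_s4 s c (x := x) (by omega)
  have hadd (j : ι) : f j + (c j - f j) = c j := Nat.add_sub_cancel' (hfc j)
  have hsum : ∑ j ∈ s, f j + ∑ j ∈ s, (c j - f j) = x + y := by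
    rw [← sum_add_distrib, ← h]
    exact sum_congr rfl fun j _ => hadd j
  exact ⟨![f, fun j => c j - f j], hadd, hfx, by simpa [hfx] using hsum⟩

lemma exists_even_excess {p q t : ℕ} (h : Even (p + q + t)) :
    ∃ x y r : ℕ, x + q = y + p ∧ t + r = x + y ∧ Even r ∧ r ≤ max p q := by
  simp only [Nat.even_iff] at h ⊢
  -- `r` is the truncated `|p - q| - t`, so no subtraction below truncates and the halves are exact.
  let r := max p q - min p q - t
  exact ⟨(t + r + p - q) / 2, (t + r + q - p) / 2, r, by omega, by omega, by omega, by omega⟩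

lemma exists_columns_with_row_sum_difference {K : Finset ι} {z : ι} (hz : z ∈ K)
    (β : ι → ℕ) {p q : ℕ} (h : Even (p + q + ∑ j ∈ K, β j)) :
    ∃ (C : Fin 2 → ι → ℕ) (r : ℕ),
      ∑ j ∈ K, C 0 j + q = ∑ j ∈ K, C 1 j + p ∧ Even r ∧ r ≤ max p q ∧
      C 0 z + C 1 z = β z + r ∧ ∀ j, j ≠ z → C 0 j + C 1 j = β j := by
  classical
  obtain ⟨x, y, r, hxy, htotal, hr, hle⟩ := exists_even_excess h
  have hsum : ∑ j ∈ K, (β j + (Pi.single z r : ι → ℕ) j) = x + y := by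
    rw [sum_add_distrib, sum_pi_single', if_pos hz, htotal]
  obtain ⟨C, hC, rfl, rfl⟩ := exists_two_row_matrix_of_sum_eq_add K _ hsum
  exact ⟨C, r, hxy, hr, hle, by simp [hC], fun j hj => by simp [hC, hj]⟩

end ColumnReplacement

theorem move_excess_to_first_column_general {ι : Type*} [Fintype ι] [DecidableEq ι] (z : ι) (L : ℕ)
    (A : Fin 2 → ι → ℕ)
    (hAL : ∀ i j, A i j ≤ L)
    (hArow : ∑ j, A 0 j = ∑ j, A 1 j)
    (β : ι → ℕ)
    (hβeven : Even (∑ j, β j))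
    (I : Finset ι)
    (hI : ∀ j ∉ I, β j = A 0 j + A 1 j) :
    ∃ B : Fin 2 → ι → ℕ, ∃ r : ℕ,
      (∑ j, B 0 j = ∑ j, B 1 j) ∧
      (∀ j, j ∉ I ∪ {z} → ∀ i, B i j = A i j) ∧
      Even r ∧ r ≤ L * (I.card + 1) ∧
      B 0 z + B 1 z = β z + r ∧
      (∀ j, j ≠ z → B 0 j + B 1 j = β j) := by
  set K := I ∪ {z}
  have hzK : z ∈ K := by simp [K]
  have hβ : ∀ j ∉ K, β j = A 0 j + A 1 j := fun j hj => hI j (notMem_mono subset_union_left hj)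
  have hparity : Even (∑ j ∈ K, A 0 j + ∑ j ∈ K, A 1 j + ∑ j ∈ K, β j) := by
    have htotal := sum_add_sum_eq_of_eqOn_compl hβ
    simp only [sum_add_distrib] at htotal
    grind
  have hAK (i : Fin 2) : ∑ j ∈ K, A i j ≤ L * (I.card + 1) := calc
    ∑ j ∈ K, A i j ≤ K.card * L := sum_le_card_nsmul K (A i) L fun j _ => hAL i j
    _ ≤ L * (I.card + 1) := by
      rw [mul_comm]
      exact Nat.mul_le_mul_left L (card_union_le I {z})
  obtain ⟨C, r, hC, hr, hle, hCz, hCβ⟩ :=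
    exists_columns_with_row_sum_difference hzK β hparity
  let B (i : Fin 2) : ι → ℕ := K.piecewise (C i) (A i)
  have hBK {j : ι} (hj : j ∈ K) (i : Fin 2) : B i j = C i j := piecewise_eq_of_mem _ _ _ hj
  have hBA (j : ι) (hj : j ∉ K) (i : Fin 2) : B i j = A i j := piecewise_eq_of_notMem _ _ _ hj
  have hBsum (i : Fin 2) : ∑ j, B i j + ∑ j ∈ K, A i j = ∑ j, A i j + ∑ j ∈ K, C i j := by
    rw [sum_add_sum_eq_of_eqOn_compl fun j hj => hBA j hj i, sum_congr rfl fun j hj => hBK hj i]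
  refine ⟨B, r, ?_, hBA, hr, hle.trans (max_le (hAK 0) (hAK 1)), ?_, fun j hj => ?_⟩
  · have := hBsum 0
    have := hBsum 1
    omega
  · rw [hBK hzK, hBK hzK, hCz]
  · by_cases hjK : j ∈ K
    · rw [hBK hjK, hBK hjK, hCβ j hj]
    · rw [hBA j hjK, hBA j hjK, hβ j hjK]

/-- **Step 1: moving the excess to the first column.**
For a `2 × n` matrix `A` with entries at most `L` and equal row sums, and a target
vector `β` with entries at most `M` and even total sum such that the first column is
not in the disagreement set `I = {j : β j ≠ (deg A)_j}`, there is a `2 × n` matrix `B`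
with equal row sums, agreeing with `A` outside `I ∪ {first column}`, whose column sums
are `(β_1 + r, β_2, …, β_n)` for some even `r ≤ (2L + M)(|I| + 1)`. -/
theorem move_excess_to_first_column (n : ℕ) (hn : 0 < n) (L M : ℕ)
    (A : Fin 2 → Fin n → ℕ)
    (hAL : ∀ i j, A i j ≤ L)
    (hArow : ∑ j, A 0 j = ∑ j, A 1 j)
    (β : Fin n → ℕ)
    (hβM : ∀ j, β j ≤ M)
    (hβeven : Even (∑ j, β j))
    (I : Finset (Fin n))
    (hI : I = Finset.univ.filter fun j => β j ≠ A 0 j + A 1 j)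
    (h1 : (⟨0, hn⟩ : Fin n) ∉ I) :
    ∃ B : Fin 2 → Fin n → ℕ, ∃ r : ℕ,
      (∑ j, B 0 j = ∑ j, B 1 j) ∧
      (∀ j, j ∉ I ∪ {(⟨0, hn⟩ : Fin n)} → ∀ i, B i j = A i j) ∧
      Even r ∧ r ≤ (2 * L + M) * (I.card + 1) ∧
      B 0 ⟨0, hn⟩ + B 1 ⟨0, hn⟩ = β ⟨0, hn⟩ + r ∧
      (∀ j, j ≠ (⟨0, hn⟩ : Fin n) → B 0 j + B 1 j = β j) := by
  obtain ⟨B, r, hrow, hBA, hr, hle, hz, hB⟩ :=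
    move_excess_to_first_column_general ⟨0, hn⟩ L A hAL hArow β hβeven I (by simp [hI])
  exact ⟨B, r, hrow, hBA, hr, hle.trans (by gcongr; omega), hz, hB⟩
end

section
/- Let n ≥ 1, let β = (β_1, …, β_n) be nonnegative integers, and let r be a nonnegative even integer. Let B be a 2 × n matrix with nonnegative integer entries whose two row sums are equal and whose vector of column sums is (β_1 + r, β_2, …, β_n). Then there exists a 2 × n matrix A' with nonnegative integer entries whose two row sums are equal, whose vector of column sums is exactly (β_1, …, β_n), and which differs from B in at most r + 1 columns. -/
/-!
Truncate the top row of `B` entrywise at `β`. If the column sums of `B` are `β + ε`, this only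
touches columns with `ε j ≠ 0` and lowers the row sum by at most `∑ ε`, hence brings it within
`max s t` of half of `∑ β` when `∑ ε = s + t` and the row sums of `B` differ by `s - t`. Moving the
row sum the rest of the way inside the box `[0, β]` costs at most one further column per unit, and
complementing in `β` gives the bottom row.
-/

open Finset

section BoundedSums

variable {ι : Type*}

theorem card_filter_ne_add_sum_le_sum_s5 {s : Finset ι} {f g : ι → ℕ} (hfg : ∀ j ∈ s, f j ≤ g j) :
    #{j ∈ s | g j ≠ f j} + ∑ j ∈ s, f j ≤ ∑ j ∈ s, g j := by
  rw [card_filter, ← sum_add_distrib]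
  refine sum_le_sum fun j hj ↦ ?_
  have := hfg j hj
  split_ifs <;> omega

variable [Fintype ι]

theorem exists_mem_Icc_sum_eq_s5 {l u : ι → ℕ} (hlu : l ≤ u) {N : ℕ} (hl : ∑ j, l j ≤ N)
    (hu : N ≤ ∑ j, u j) : ∃ g ∈ Set.Icc l u, ∑ j, g j = N := by
  obtain ⟨d, rfl⟩ := le_iff_exists_add.mp hlu
  simp only [Pi.add_apply, sum_add_distrib] at hu
  obtain ⟨e, hed, he⟩ := Finsupp.exists_le_degree_eq (Finsupp.equivFunOnFinite.symm d)
    (N - ∑ j, l j) (by simpa [Finsupp.degree_eq_sum, add_comm] using hu)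
  rw [Finsupp.degree_eq_sum] at he
  refine ⟨l + e, ⟨le_self_add, fun j ↦ Nat.add_le_add_left (hed j) _⟩, ?_⟩
  simp only [Pi.add_apply, sum_add_distrib]
  omega

theorem exists_le_sum_eq_card_ne_le {f u : ι → ℕ} (hfu : f ≤ u) {N d : ℕ} (hN : N ≤ ∑ j, u j)
    (hNf : N ≤ ∑ j, f j + d) (hfN : ∑ j, f j ≤ N + d) :
    ∃ g ≤ u, ∑ j, g j = N ∧ #{j | g j ≠ f j} ≤ d := by
  rcases le_total N (∑ j, f j) with h | h
  · obtain ⟨g, ⟨-, hgf⟩, hg⟩ := exists_mem_Icc_sum_eq_s5 (zero_le : 0 ≤ f) (by simp) h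
    have hcard := card_filter_ne_add_sum_le_sum_s5 (s := univ) fun j _ ↦ hgf j
    simp only [ne_comm (a := f _)] at hcard
    exact ⟨g, hgf.trans hfu, hg, by omega⟩
  · obtain ⟨g, ⟨hfg, hgu⟩, hg⟩ := exists_mem_Icc_sum_eq_s5 hfu h hN
    have hcard := card_filter_ne_add_sum_le_sum_s5 (s := univ) fun j _ ↦ hfg j
    exact ⟨g, hgu, hg, by omega⟩

end BoundedSums

theorem remove_excess_from_first_column_general {ι : Type*} [Fintype ι] (β ε : ι → ℕ) {s t : ℕ}
    (hε : ∑ j, ε j = s + t) (B : Fin 2 → ι → ℕ)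
    (hBrow : ∑ j, B 0 j + t = ∑ j, B 1 j + s)
    (hBcol : ∀ j, B 0 j + B 1 j = β j + ε j) :
    ∃ A' : Fin 2 → ι → ℕ,
      (∑ j, A' 0 j = ∑ j, A' 1 j) ∧
      (∀ j, A' 0 j + A' 1 j = β j) ∧
      #{j | ∃ i, A' i j ≠ B i j} ≤ max s t + #{j | ε j ≠ 0} := by
  classical
  have hBtotal : ∑ j, B 0 j + ∑ j, B 1 j = ∑ j, β j + (s + t) := by
    simp only [← hε, ← sum_add_distrib, hBcol]
  have hs : s ≤ ∑ j, B 0 j := by omega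
  have htrunc_le : ∑ j, min (B 0 j) (β j) ≤ ∑ j, B 0 j := sum_le_sum fun j _ ↦ min_le_left _ _
  have hle_trunc : ∑ j, B 0 j ≤ ∑ j, min (B 0 j) (β j) + (s + t) := by
    rw [← hε, ← sum_add_distrib]
    exact sum_le_sum fun j _ ↦ by have := hBcol j; omega
  obtain ⟨a, haβ, hasum, hacard⟩ := exists_le_sum_eq_card_ne_le (d := max s t)
    (N := ∑ j, B 0 j - s) (fun j ↦ min_le_right (B 0 j) (β j)) (by omega) (by omega) (by omega)
  have hcol (j : ι) : a j + (β j - a j) = β j := Nat.add_sub_of_le (haβ j)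
  have htotal : ∑ j, a j + ∑ j, (β j - a j) = ∑ j, β j := by simp only [← sum_add_distrib, hcol]
  refine ⟨![a, fun j ↦ β j - a j], ?_, hcol, ?_⟩
  · change ∑ j, a j = ∑ j, (β j - a j)
    omega
  · have hchanged : ({j | ∃ i, ![a, fun j ↦ β j - a j] i j ≠ B i j} : Finset ι) ⊆
        ({j | a j ≠ min (B 0 j) (β j)} : Finset ι) ∪ ({j | ε j ≠ 0} : Finset ι) := by
      intro j
      have := hBcol j
      simp only [mem_filter_univ, mem_union, Fin.exists_fin_two, Matrix.cons_val_zero,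
        Matrix.cons_val_one]
      omega
    exact (card_le_card hchanged).trans <| (card_union_le _ _).trans <|
      Nat.add_le_add_right hacard _

/-- **Step 2: removing the even excess `r` from the first column.**
If a `2 × n` matrix `B` has equal row sums and column sums `(β_1 + r, β_2, …, β_n)`
with `r` even, then there is a `2 × n` matrix `A'` with equal row sums, column sums
exactly `β`, differing from `B` in at most `r + 1` columns. -/
theorem remove_excess_from_first_column (n : ℕ) (hn : 0 < n)
    (β : Fin n → ℕ) (r : ℕ) (hr : Even r)
    (B : Fin 2 → Fin n → ℕ)
    (hBrow : ∑ j, B 0 j = ∑ j, B 1 j)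
    (hBcol1 : B 0 ⟨0, hn⟩ + B 1 ⟨0, hn⟩ = β ⟨0, hn⟩ + r)
    (hBcol : ∀ j, j ≠ (⟨0, hn⟩ : Fin n) → B 0 j + B 1 j = β j) :
    ∃ A' : Fin 2 → Fin n → ℕ,
      (∑ j, A' 0 j = ∑ j, A' 1 j) ∧
      (∀ j, A' 0 j + A' 1 j = β j) ∧
      (Finset.univ.filter fun j : Fin n => ∃ i, A' i j ≠ B i j).card ≤ r + 1 := by
  obtain ⟨k, rfl⟩ := hr
  have hsupport : #{j | (Pi.single ⟨0, hn⟩ (k + k) : Fin n → ℕ) j ≠ 0} ≤ 1 :=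
    card_le_one.mpr (by grind)
  obtain ⟨A', hrow, hcol, hcard⟩ := remove_excess_from_first_column_general β
    (Pi.single ⟨0, hn⟩ (k + k)) (s := k) (t := k) (by simp) B (by rw [hBrow])
    (by grind)
  exact ⟨A', hrow, hcol, by omega⟩
end

section
/- Fix integers L ≥ 1 and δ ≥ 1. For each n, let D_n = (D_n(1), …, D_n(n)) ∈ 𝒟_n(L) be an n-tuple of L × L matrices with all entries at most δ, and let ℓ_n = (ℓ_{n,1}, …, ℓ_{n,n}) be nonnegative integers with ℓ_{n,i} ≤ L for all i and Σ_{i=1}^n ℓ_{n,i} even, such that the number of indices i ∈ {1, …, n} for which the total entry sum of D_n(i) differs from ℓ_{n,i} is o(n). Then for every sufficiently large n there exists D̃_n = (D̃_n(1), …, D̃_n(n)) ∈ 𝒟_n(L) such that the total entry sum of D̃_n(i) equals ℓ_{n,i} for every i ∈ {1, …, n}, and the number of indices i with D̃_n(i) ≠ D_n(i) is o(n) as n → ∞. -/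
open Filter

/-- The set `𝒟_n(L)`: `n`-tuples of `L × L` matrices with nonnegative integer entries
whose sum `S = Σ_i D(i)` is symmetric with even diagonal entries. -/
def memDSeq (n L : ℕ) (D : Fin n → Matrix (Fin L) (Fin L) ℕ) : Prop :=
  (∑ i, D i).IsSymm ∧ ∀ c : Fin L, Even ((∑ i, D i) c c)

/-- The total entry sum of an `L × L` matrix. -/
def totalSum {L : ℕ} (D : Matrix (Fin L) (Fin L) ℕ) : ℕ := ∑ c, ∑ c', D c c'

/-!
Erase the matrices `D i` whose total is wrong. This removes a matrix `M` from `S = ∑ i, D i`, and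
removing as much as possible of `Mᵀ` as well, taken from the remaining matrices, leaves the
truncated difference `S - (M + Mᵀ)`, which is again symmetric with even diagonal. Now no total
exceeds its target, so each matrix can be topped up at one fixed diagonal entry. Symmetric matrices
with even diagonal have even total, so if the targets sum to an even number then so do the top-ups,
and the result is still in `𝒟_n(L)`. Besides the erased indices, at most `totalSum M` indices were
touched, which is a bounded multiple of the number of erased ones when the entries are bounded.
-/

/-- A symmetric matrix with even diagonal, that is, the adjacency matrix of a multigraph in which
each loop counts twice. The condition `memDSeq n L D` unfolds to `IsEvenSymm (∑ i, D i)`. -/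
def IsEvenSymm {C : Type*} (S : Matrix C C ℕ) : Prop :=
  S.IsSymm ∧ ∀ c, Even (S c c)

namespace IsEvenSymm

open scoped Matrix

variable {C : Type*} {S T : Matrix C C ℕ}

theorem add (hS : IsEvenSymm S) (hT : IsEvenSymm T) : IsEvenSymm (S + T) :=
  ⟨hS.1.add hT.1, fun c => (hS.2 c).add (hT.2 c)⟩

theorem tsub (hS : IsEvenSymm S) (hT : IsEvenSymm T) : IsEvenSymm (S - T) :=
  ⟨hS.1.sub hT.1, fun c => (hS.2 c).tsub (hT.2 c)⟩

theorem add_transpose (M : Matrix C C ℕ) : IsEvenSymm (M + Mᵀ) :=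
  ⟨Matrix.isSymm_add_transpose_self M, fun c => Even.add_self (M c c)⟩

theorem single [DecidableEq C] (z : C) {k : ℕ} (hk : Even k) :
    IsEvenSymm (Matrix.single z z k) := by
  refine ⟨Matrix.transpose_single z z k, fun c => ?_⟩
  rw [Matrix.single_apply]
  split_ifs
  exacts [hk, Even.zero]

theorem even_sum [Fintype C] (hS : IsEvenSymm S) : Even (∑ c, ∑ d, S c d) := by
  rw [← Fintype.sum_prod_type' (fun c d => S c d), ← ZMod.natCast_eq_zero_iff_even, Nat.cast_sum]
  refine Finset.sum_involution (fun e _ => e.swap) (fun e _ => ?_) (fun e _ hodd hfix => ?_)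
    (fun e _ => Finset.mem_univ _) (fun e _ => e.swap_swap)
  · rw [Prod.fst_swap, Prod.snd_swap, hS.1.apply]
    exact CharTwo.add_self_eq_zero _
  · have hdiag : e.2 = e.1 := congrArg Prod.fst hfix
    exact hodd ((ZMod.natCast_eq_zero_iff_even).2 (hdiag ▸ hS.2 e.1))

end IsEvenSymm

section totalSum

open scoped Matrix

variable {L : ℕ}

theorem totalSum_add (A B : Matrix (Fin L) (Fin L) ℕ) :
    totalSum (A + B) = totalSum A + totalSum B := by
  simp only [totalSum, Matrix.add_apply, Finset.sum_add_distrib]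

theorem totalSum_sum {ι : Type*} (s : Finset ι) (A : ι → Matrix (Fin L) (Fin L) ℕ) :
    totalSum (∑ i ∈ s, A i) = ∑ i ∈ s, totalSum (A i) := by
  simp only [totalSum, Matrix.sum_apply, Finset.sum_comm (s := s)]

theorem totalSum_transpose (A : Matrix (Fin L) (Fin L) ℕ) : totalSum Aᵀ = totalSum A :=
  Finset.sum_comm

theorem totalSum_zero : totalSum (0 : Matrix (Fin L) (Fin L) ℕ) = 0 := by
  simp [totalSum]

theorem totalSum_single (c d : Fin L) (k : ℕ) : totalSum (Matrix.single c d k) = k := by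
  simp [totalSum, Matrix.single_apply, ite_and]

theorem totalSum_mono {A B : Matrix (Fin L) (Fin L) ℕ} (h : ∀ c d, A c d ≤ B c d) :
    totalSum A ≤ totalSum B :=
  Finset.sum_le_sum fun c _ => Finset.sum_le_sum fun d _ => h c d

theorem totalSum_le_totalSum_tsub_add (A B : Matrix (Fin L) (Fin L) ℕ) :
    totalSum A ≤ totalSum (A - B) + totalSum B :=
  totalSum_add (A - B) B ▸ totalSum_mono fun _ _ => le_tsub_add

theorem totalSum_lt_of_le_of_ne {A B : Matrix (Fin L) (Fin L) ℕ} (hle : ∀ c d, A c d ≤ B c d)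
    (hne : A ≠ B) : totalSum A < totalSum B := by
  obtain ⟨c, d, hcd⟩ : ∃ c d, A c d ≠ B c d := by
    contrapose! hne
    exact Matrix.ext hne
  refine Finset.sum_lt_sum (fun c _ => Finset.sum_le_sum fun d _ => hle c d)
    ⟨c, Finset.mem_univ c, ?_⟩
  exact Finset.sum_lt_sum (fun d _ => hle c d) ⟨d, Finset.mem_univ d, (hle c d).lt_of_ne hcd⟩

theorem totalSum_le_of_forall_le {A : Matrix (Fin L) (Fin L) ℕ} {δ : ℕ}
    (h : ∀ c d, A c d ≤ δ) : totalSum A ≤ L * (L * δ) := by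
  simpa [totalSum] using totalSum_mono (B := Matrix.of fun _ _ => δ) h

end totalSum

section FiniteFamilies

open scoped Matrix

variable {ι : Type*} [Fintype ι] {L : ℕ}

theorem exists_le_sum_eq_s6 (a : ι → ℕ) {k : ℕ} (hk : k ≤ ∑ i, a i) :
    ∃ b : ι → ℕ, (∀ i, b i ≤ a i) ∧ ∑ i, b i = k := by
  obtain ⟨b, hba, hbk⟩ := Finsupp.exists_le_degree_eq (Finsupp.equivFunOnFinite.symm a) k
    (by simpa [Finsupp.degree_eq_sum] using hk)
  exact ⟨b, hba, by rw [← Finsupp.degree_eq_sum, hbk]⟩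

theorem card_filter_ne_add_sum_totalSum_le {K A : ι → Matrix (Fin L) (Fin L) ℕ}
    (h : ∀ i c d, K i c d ≤ A i c d) :
    (Finset.univ.filter fun i => K i ≠ A i).card + ∑ i, totalSum (K i) ≤
      ∑ i, totalSum (A i) := by
  rw [Finset.card_filter, ← Finset.sum_add_distrib]
  refine Finset.sum_le_sum fun i _ => ?_
  split_ifs with hne
  · have := totalSum_lt_of_le_of_ne (h i) hne
    lia
  · simpa using totalSum_mono (h i)

theorem exists_le_sum_eq_tsub_card_filter_ne_le (A : ι → Matrix (Fin L) (Fin L) ℕ)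
    (R : Matrix (Fin L) (Fin L) ℕ) :
    ∃ K : ι → Matrix (Fin L) (Fin L) ℕ, (∀ i c d, K i c d ≤ A i c d) ∧
      ∑ i, K i = ∑ i, A i - R ∧
      (Finset.univ.filter fun i => K i ≠ A i).card ≤ totalSum R := by
  choose k hkA hksum using fun c d =>
    exists_le_sum_eq_s6 (fun i => A i c d) (Nat.sub_le (∑ i, A i c d) (R c d))
  let K : ι → Matrix (Fin L) (Fin L) ℕ := fun i => Matrix.of fun c d => k c d i
  have hKA : ∀ i c d, K i c d ≤ A i c d := fun i c d => hkA c d i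
  have hKsum : ∑ i, K i = ∑ i, A i - R := by
    ext c d
    simpa [K, Matrix.sum_apply] using hksum c d
  have hcard := card_filter_ne_add_sum_totalSum_le hKA
  rw [← totalSum_sum, ← totalSum_sum, hKsum] at hcard
  have hR := totalSum_le_totalSum_tsub_add (∑ i, A i) R
  exact ⟨K, hKA, hKsum, by lia⟩

theorem exists_isEvenSymm_sum_le_of_eq_zero_on [DecidableEq ι]
    {D : ι → Matrix (Fin L) (Fin L) ℕ} (hD : IsEvenSymm (∑ i, D i)) (B : Finset ι) :
    ∃ K : ι → Matrix (Fin L) (Fin L) ℕ, IsEvenSymm (∑ i, K i) ∧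
      (∀ i c d, K i c d ≤ D i c d) ∧ (∀ i ∈ B, K i = 0) ∧
      (Finset.univ.filter fun i => i ∉ B ∧ K i ≠ D i).card ≤ ∑ i ∈ B, totalSum (D i) := by
  let M := ∑ i ∈ B, D i
  let A : ι → Matrix (Fin L) (Fin L) ℕ := B.piecewise 0 D
  have hAB : ∀ i ∈ B, A i = 0 := fun i hi => B.piecewise_eq_of_mem _ _ hi
  have hAD : ∀ i ∉ B, A i = D i := fun i hi => B.piecewise_eq_of_notMem _ _ hi
  have hsum : ∑ i, D i = ∑ i, A i + M := by
    simp [A, M, Finset.sum_piecewise, ← Finset.compl_eq_univ_sdiff, Finset.sum_compl_add_sum]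
  have hcancel : ∑ i, D i - (M + Mᵀ) = ∑ i, A i - Mᵀ := by
    ext c d
    simp only [hsum, Matrix.sub_apply, Matrix.add_apply]
    lia
  obtain ⟨K, hKA, hKsum, hcard⟩ := exists_le_sum_eq_tsub_card_filter_ne_le A Mᵀ
  refine ⟨K, ?_, fun i c d => ?_, fun i hi => ?_, ?_⟩
  · rw [hKsum, ← hcancel]
    exact hD.tsub (.add_transpose M)
  · by_cases hi : i ∈ B
    · exact (hKA i c d).trans (by simp [hAB i hi])
    · exact hAD i hi ▸ hKA i c d
  · ext c d
    simpa [hAB i hi] using hKA i c d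
  · rw [totalSum_transpose, totalSum_sum] at hcard
    refine (Finset.card_le_card ?_).trans hcard
    exact Finset.monotone_filter_right _ fun i _ hi => hAD i hi.1 ▸ hi.2

theorem exists_isEvenSymm_sum_totalSum_eq_of_le (z : Fin L) {K : ι → Matrix (Fin L) (Fin L) ℕ}
    (hK : IsEvenSymm (∑ i, K i)) {ℓ : ι → ℕ} (hℓ : Even (∑ i, ℓ i))
    (hle : ∀ i, totalSum (K i) ≤ ℓ i) :
    ∃ F : ι → Matrix (Fin L) (Fin L) ℕ, IsEvenSymm (∑ i, F i) ∧
      (∀ i, totalSum (F i) = ℓ i) ∧ ∀ i, totalSum (K i) = ℓ i → F i = K i := by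
  have hdeficit : Even (∑ i, (ℓ i - totalSum (K i))) := by
    have hKeven : Even (∑ i, totalSum (K i)) := totalSum_sum Finset.univ K ▸ hK.even_sum
    rw [Finset.sum_tsub_distrib _ fun i _ => hle i]
    exact hℓ.tsub hKeven
  refine ⟨fun i => K i + Matrix.single z z (ℓ i - totalSum (K i)), ?_, fun i => ?_,
    fun i hi => by simp [hi]⟩
  · rw [Finset.sum_add_distrib]
    convert hK.add (.single z hdeficit)
    exact (map_sum (Matrix.singleAddMonoidHom (α := ℕ) z z) _ _).symm
  · rw [totalSum_add, totalSum_single, Nat.add_sub_cancel' (hle i)]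

theorem exists_isEvenSymm_sum_totalSum_eq_card_filter_ne_le (z : Fin L)
    {D : ι → Matrix (Fin L) (Fin L) ℕ} (hD : IsEvenSymm (∑ i, D i))
    {ℓ : ι → ℕ} (hℓ : Even (∑ i, ℓ i)) :
    ∃ F : ι → Matrix (Fin L) (Fin L) ℕ, IsEvenSymm (∑ i, F i) ∧
      (∀ i, totalSum (F i) = ℓ i) ∧
      (Finset.univ.filter fun i => F i ≠ D i).card ≤
        ∑ i with totalSum (D i) ≠ ℓ i, (totalSum (D i) + 1) := by
  classical
  set B := Finset.univ.filter fun i => totalSum (D i) ≠ ℓ i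
  have hgood : ∀ i ∉ B, totalSum (D i) = ℓ i := by simp [B]
  obtain ⟨K, hK, hKD, hKB, hcard⟩ := exists_isEvenSymm_sum_le_of_eq_zero_on hD B
  have hKℓ : ∀ i, totalSum (K i) ≤ ℓ i := fun i => by
    by_cases hi : i ∈ B
    · simp [hKB i hi, totalSum_zero]
    · exact hgood i hi ▸ totalSum_mono (hKD i)
  obtain ⟨F, hF, hFℓ, hFK⟩ := exists_isEvenSymm_sum_totalSum_eq_of_le z hK hℓ hKℓ
  have hchanged : (Finset.univ.filter fun i => F i ≠ D i) ⊆
      (Finset.univ.filter fun i => i ∉ B ∧ K i ≠ D i) ∪ B := fun i hi => by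
    rw [Finset.mem_filter_univ] at hi
    rw [Finset.mem_union, Finset.mem_filter_univ]
    by_contra! h
    have hKDi : K i = D i := h.1 h.2
    exact hi ((hFK i (hKDi ▸ hgood i h.2)).trans hKDi)
  refine ⟨F, hF, hFℓ, ?_⟩
  calc (Finset.univ.filter fun i => F i ≠ D i).card
      ≤ (Finset.univ.filter fun i => i ∉ B ∧ K i ≠ D i).card + B.card :=
        (Finset.card_le_card hchanged).trans (Finset.card_union_le _ _)
    _ ≤ ∑ i ∈ B, totalSum (D i) + B.card := by gcongr
    _ = ∑ i ∈ B, (totalSum (D i) + 1) := by rw [Finset.sum_add_distrib, Finset.card_eq_sum_ones]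

end FiniteFamilies

theorem tendsto_sum_div_of_le_of_tendsto_card_div {α : Type*} {l : Filter α} {ι : α → Type*}
    {s : (a : α) → Finset (ι a)} {w : (a : α) → ι a → ℕ} {N : α → ℕ} {M : ℕ}
    (hw : ∀ a, ∀ i ∈ s a, w a i ≤ M)
    (hs : Tendsto (fun a => ((s a).card : ℝ) / N a) l (nhds 0)) :
    Tendsto (fun a => ((∑ i ∈ s a, w a i : ℕ) : ℝ) / N a) l (nhds 0) := by
  refine squeeze_zero (fun a => by positivity) (fun a => ?_) (by simpa using hs.mul_const (M : ℝ))
  have hsum : ∑ i ∈ s a, w a i ≤ (s a).card * M := Finset.sum_le_card_nsmul _ _ M (hw a)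
  rw [div_mul_eq_mul_div]
  gcongr
  exact_mod_cast hsum

theorem colored_degree_sequence_modification_general (L : ℕ) (hL : 1 ≤ L)
    (D : (n : ℕ) → Fin n → Matrix (Fin L) (Fin L) ℕ)
    (ℓ : (n : ℕ) → Fin n → ℕ)
    (hD : ∀ n, memDSeq n L (D n))
    (hℓeven : ∀ n, Even (∑ i, ℓ n i))
    (hs : Tendsto
      (fun n => ((∑ i with totalSum (D n i) ≠ ℓ n i, (totalSum (D n i) + 1) : ℕ) : ℝ) / n)
      atTop (nhds 0)) :
    ∃ Dt : (n : ℕ) → Fin n → Matrix (Fin L) (Fin L) ℕ,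
      (∀ n, memDSeq n L (Dt n) ∧ ∀ i, totalSum (Dt n i) = ℓ n i) ∧
      Tendsto
        (fun n => ((Finset.univ.filter fun i : Fin n => Dt n i ≠ D n i).card : ℝ) / n)
        atTop (nhds 0) := by
  choose Dt hDt hDtℓ hcard using fun n =>
    exists_isEvenSymm_sum_totalSum_eq_card_filter_ne_le ⟨0, hL⟩ (hD n) (hℓeven n)
  refine ⟨Dt, fun n => ⟨hDt n, hDtℓ n⟩, squeeze_zero (fun n => by positivity) (fun n => ?_) hs⟩
  gcongr
  exact hcard n

/-- **Modification of colored degree sequences.**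
Given `D_n ∈ 𝒟_n(L)` with entries at most `δ` and target degrees `ℓ_n` bounded by `L`
with even total sum agreeing with the total entry sums of the `D_n(i)` in all but
`o(n)` indices, one can find, for all `n` large enough, `D̃_n ∈ 𝒟_n(L)` whose `i`-th
total entry sum equals `ℓ_{n,i}` for every `i`, with `D̃_n(i) ≠ D_n(i)` for only `o(n)`
indices `i`. -/
theorem colored_degree_sequence_modification (L δ : ℕ) (hL : 1 ≤ L) (hδ : 1 ≤ δ)
    (D : (n : ℕ) → Fin n → Matrix (Fin L) (Fin L) ℕ)
    (ℓ : (n : ℕ) → Fin n → ℕ)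
    (hD : ∀ n, memDSeq n L (D n))
    (hDδ : ∀ n i c c', D n i c c' ≤ δ)
    (hℓL : ∀ n i, ℓ n i ≤ L)
    (hℓeven : ∀ n, Even (∑ i, ℓ n i))
    (hs : Tendsto
      (fun n => ((Finset.univ.filter fun i : Fin n => totalSum (D n i) ≠ ℓ n i).card : ℝ) / n)
      atTop (nhds 0)) :
    ∃ Dt : (n : ℕ) → Fin n → Matrix (Fin L) (Fin L) ℕ,
      (∀ᶠ n in atTop, memDSeq n L (Dt n) ∧ ∀ i, totalSum (Dt n i) = ℓ n i) ∧
      Tendsto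
        (fun n => ((Finset.univ.filter fun i : Fin n => Dt n i ≠ D n i).card : ℝ) / n)
        atTop (nhds 0) := by
  obtain ⟨Dt, hDt, hlim⟩ := colored_degree_sequence_modification_general L hL D ℓ hD hℓeven <|
    tendsto_sum_div_of_le_of_tendsto_card_div
      (fun n i _ => Nat.succ_le_succ (totalSum_le_of_forall_le (hDδ n i))) hs
  exact ⟨Dt, .of_forall hDt, hlim⟩
end

section
/- Let p, m be nonnegative integers with p + m ≥ 1, let n ≥ 1, let A ∈ 𝔇(p, m, n), and let β = (β_1, …, β_n) be nonnegative integers with Σ_{j=1}^n β_j even. Set I = {j : β_j ≠ (deg A)_j} and assume |I| < n. Partition the rows of A into p + m blocks: for 1 ≤ i ≤ p, block i consists of row i alone; for p < i ≤ p + m, block i consists of the two rows p + 2(i − p) − 1 and p + 2(i − p). For each block i and column j, let d^{(i)}_j denote the sum of the entries of block i in column j. Then there exist vectors β^{(1)}, …, β^{(p+m)} of nonnegative integers of length n such that: (a) Σ_{i=1}^{p+m} β^{(i)}_j = β_j for every j; (b) Σ_{j=1}^n β^{(i)}_j is even for every i; (c) for every i with 2 ≤ i ≤ p + m, β^{(i)}_j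 = d^{(i)}_j for all j outside a set of size at most |I| + 1; and (d) β^{(1)}_j = d^{(1)}_j for all j outside a set of size at most |I| + p + m − 1. -/
/-!
The splitting is made in two passes, with one block `i₀` serving as a reservoir. First the column
sums are corrected: in each column where `∑ i, d i` differs from `β`, every block is emptied and
`i₀` receives the whole target `β j`. Then the parities are corrected: from each other block with
an odd sum one unit is moved, within its column, to `i₀`. The second pass changes each other block
in at most one column, hence `i₀` in at most one column per other block, and the sum of `i₀` is
then even because the total is.
-/

section Hamming

variable {ι κ : Type*} {M : κ → Type*} [Fintype κ] [∀ j, DecidableEq (M j)]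

theorem hammingNorm_add_le [∀ j, AddZeroClass (M j)] (x y : ∀ j, M j) :
    hammingNorm (x + y) ≤ hammingNorm x + hammingNorm y := by
  classical
  refine (Finset.card_le_card fun j hj => ?_).trans (Finset.card_union_le _ _)
  contrapose! hj
  simp_all

theorem hammingNorm_sum_le [∀ j, AddCommMonoid (M j)] (s : Finset ι) (x : ι → ∀ j, M j) :
    hammingNorm (∑ i ∈ s, x i) ≤ ∑ i ∈ s, hammingNorm (x i) :=
  Finset.le_sum_of_subadditive (fun y : ∀ j, M j => hammingNorm y) hammingNorm_zero.le
    hammingNorm_add_le s x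

theorem hammingDist_self_add [∀ j, AddMonoid (M j)] [∀ j, IsLeftCancelAdd (M j)]
    (x y : ∀ j, M j) :
    hammingDist x (x + y) = hammingNorm y := by
  simp [hammingDist, hammingNorm]

end Hamming

section Splitting

variable {ι κ M : Type*} [Fintype ι] [Fintype κ]

theorem exists_sum_eq_hammingDist_le [AddCommMonoid M] [DecidableEq M]
    (f : ι → κ → M) (β : κ → M) (i₀ : ι) :
    ∃ g : ι → κ → M, ∑ i, g i = β ∧
      ∀ i, hammingDist (g i) (f i) ≤ hammingDist β (∑ i, f i) := by
  classical
  refine ⟨fun i j => if β j = ∑ i, f i j then f i j else if i = i₀ then β j else 0, ?_, fun i => ?_⟩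
  · ext j
    by_cases hj : β j = ∑ i, f i j <;> simp [hj]
  · refine Finset.card_le_card fun j hj => ?_
    contrapose! hj
    simp_all

theorem exists_le_hammingNorm_le_one_even_sum_sub (f : κ → ℕ) :
    ∃ e ≤ f, hammingNorm e ≤ 1 ∧ Even (∑ j, (f - e) j) := by
  classical
  by_cases hf : Even (∑ j, f j)
  · exact ⟨0, zero_le, by simp, by simpa using hf⟩
  · obtain ⟨c, -, hc⟩ : ∃ c ∈ Finset.univ, f c ≠ 0 :=
      Finset.exists_ne_zero_of_sum_ne_zero fun h => hf (h ▸ Even.zero)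
    let e : κ → ℕ := Pi.single c 1
    have hle : e ≤ f := by
      intro j
      obtain rfl | hj := eq_or_ne j c
      · simpa [e] using Nat.one_le_iff_ne_zero.2 hc
      · simp [e, hj]
    have hsum : ∑ j, (f - e) j + 1 = ∑ j, f j := by
      conv_rhs => rw [← tsub_add_cancel_of_le hle]
      simp [Finset.sum_add_distrib, e]
    refine ⟨e, hle, ?_, ?_⟩
    · exact (Finset.card_le_card (t := {c}) fun j hj => by simp_all [e, Pi.single_apply]).trans_eq
        (Finset.card_singleton c)
    · rwa [← hsum, Nat.even_add_one, not_not] at hf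

theorem sum_update_tsub_add_sum_erase [DecidableEq ι] [AddCommMonoid M] [PartialOrder M] [Sub M]
    [OrderedSub M] [ExistsAddOfLE M] [AddLeftMono M] {f e : ι → M} (hle : e ≤ f) (i₀ : ι) :
    ∑ i, Function.update (fun i => f i - e i) i₀ (f i₀ + ∑ i ∈ Finset.univ.erase i₀, e i) i =
      ∑ i, f i := by
  rw [Finset.sum_update_of_mem (Finset.mem_univ i₀), Finset.sdiff_singleton_eq_erase, add_assoc,
    ← Finset.sum_add_distrib, ← Finset.add_sum_erase _ f (Finset.mem_univ i₀)]
  simp only [add_tsub_cancel_of_le (hle _)]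

theorem even_of_even_sum_of_forall_ne {f : ι → ℕ} (hf : Even (∑ i, f i)) {i₀ : ι}
    (h : ∀ i ≠ i₀, Even (f i)) : Even (f i₀) := by
  classical
  rw [← Finset.add_sum_erase _ _ (Finset.mem_univ i₀), Nat.even_add] at hf
  exact hf.2 (Finset.even_sum _ fun i hi => h i (Finset.ne_of_mem_erase hi))

theorem exists_sum_eq_even_sum_hammingDist_le (f : ι → κ → ℕ) (hf : Even (∑ j, (∑ i, f i) j))
    (i₀ : ι) :
    ∃ g : ι → κ → ℕ, ∑ i, g i = ∑ i, f i ∧ (∀ i, Even (∑ j, g i j)) ∧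
      (∀ i ≠ i₀, hammingDist (g i) (f i) ≤ 1) ∧
      hammingDist (g i₀) (f i₀) ≤ Fintype.card ι - 1 := by
  classical
  choose e hle hnorm heven using fun i => exists_le_hammingNorm_le_one_even_sum_sub (f i)
  let T : Finset ι := Finset.univ.erase i₀
  let g : ι → κ → ℕ := Function.update (fun i => f i - e i) i₀ (f i₀ + ∑ i ∈ T, e i)
  have hg₀ : g i₀ = f i₀ + ∑ i ∈ T, e i := Function.update_self ..
  have hg : ∀ i ≠ i₀, g i = f i - e i := fun i hi => Function.update_of_ne hi ..
  have hsum : ∑ i, g i = ∑ i, f i := sum_update_tsub_add_sum_erase hle i₀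
  have heven_ne : ∀ i ≠ i₀, Even (∑ j, g i j) := fun i hi => hg i hi ▸ heven i
  have heven₀ : Even (∑ j, g i₀ j) := by
    refine even_of_even_sum_of_forall_ne (f := fun i => ∑ j, g i j) ?_ heven_ne
    rw [← hsum] at hf
    rw [Finset.sum_comm]
    simpa only [Finset.sum_apply] using hf
  refine ⟨g, hsum, fun i => ?_, fun i hi => ?_, ?_⟩
  · obtain rfl | hi := eq_or_ne i i₀
    exacts [heven₀, heven_ne i hi]
  · calc hammingDist (g i) (f i) = hammingDist (f i - e i) (f i - e i + e i) := by
          rw [hg i hi, tsub_add_cancel_of_le (hle i)]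
      _ = hammingNorm (e i) := hammingDist_self_add _ _
      _ ≤ 1 := hnorm i
  · calc hammingDist (g i₀) (f i₀) = hammingNorm (∑ i ∈ T, e i) := by
          rw [hg₀, hammingDist_comm, hammingDist_self_add]
      _ ≤ ∑ i ∈ T, hammingNorm (e i) := hammingNorm_sum_le T e
      _ ≤ T.card • 1 := Finset.sum_le_card_nsmul _ _ _ fun i _ => hnorm i
      _ = Fintype.card ι - 1 := by simp [T]

theorem split_target_degrees_into_blocks_general (d : ι → κ → ℕ) (β : κ → ℕ)
    (hβ : Even (∑ j, β j)) (i₀ : ι) :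
    ∃ b : ι → κ → ℕ, ∑ i, b i = β ∧ (∀ i, Even (∑ j, b i j)) ∧
      (∀ i ≠ i₀, hammingDist (b i) (d i) ≤ hammingDist β (∑ i, d i) + 1) ∧
      hammingDist (b i₀) (d i₀) ≤ hammingDist β (∑ i, d i) + (Fintype.card ι - 1) := by
  obtain ⟨f, rfl, hfd⟩ := exists_sum_eq_hammingDist_le d β i₀
  obtain ⟨b, hb, heven, hbf, hbf₀⟩ := exists_sum_eq_even_sum_hammingDist_le f hβ i₀
  refine ⟨b, hb, heven, fun i hi => ?_, ?_⟩
  · rw [add_comm]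
    exact (hammingDist_triangle _ (f i) _).trans (add_le_add (hbf i hi) (hfd i))
  · rw [add_comm]
    exact (hammingDist_triangle _ (f i₀) _).trans (add_le_add hbf₀ (hfd i₀))

end Splitting

section Blocks

variable {M : Type*} [AddCommMonoid M]

theorem sum_fin_two_mul {m : ℕ} (f : Fin (2 * m) → M) :
    ∑ i, f i = ∑ k : Fin m, (f ⟨2 * k, by omega⟩ + f ⟨2 * k + 1, by omega⟩) := by
  induction m with
  | zero => simp
  | succ m ih =>
    change ∑ i : Fin (2 * m + 1 + 1), f i = _
    simp only [Fin.sum_univ_castSucc, ih, add_assoc]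
    rfl

theorem sum_blocks_eq_sum {p m : ℕ} {a : Fin (p + 2 * m) → M} {e : Fin (p + m) → M}
    (hsingle : ∀ i : Fin p, e (Fin.castAdd m i) = a (Fin.castAdd (2 * m) i))
    (hpair : ∀ k : Fin m, e (Fin.natAdd p k) =
      a (Fin.natAdd p ⟨2 * k, by omega⟩) + a (Fin.natAdd p ⟨2 * k + 1, by omega⟩)) :
    ∑ i, e i = ∑ i, a i := by
  simp only [Fin.sum_univ_add, sum_fin_two_mul, hsingle, hpair]

end Blocks

/-- **Splitting the target degrees among the blocks.**
The rows of `A ∈ 𝔇(p, m, n)` are partitioned into `p + m` blocks (0-based: block `i`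
with `i < p` is row `i` alone; block `i` with `p ≤ i < p + m` consists of the two
rows `p + 2(i - p)` and `p + 2(i - p) + 1`); `d i j` is the sum of the entries of
block `i` in column `j`. Then the target degree vector `β` (with even total sum and
disagreement set `I = {j : β j ≠ (deg A)_j}` with `|I| < n`) may be split into
nonnegative vectors `β⁽⁰⁾, …, β⁽ᵖ⁺ᵐ⁻¹⁾` summing columnwise to `β`, each with even
total sum, each with `i ≥ 1` agreeing with the block degrees `d i` outside a set of
at most `|I| + 1` columns, and `β⁽⁰⁾` agreeing with `d 0` outside a set of at most
`|I| + p + m - 1` columns. -/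
theorem split_target_degrees_into_blocks (p m n : ℕ) (hpm : 1 ≤ p + m) (hn : 1 ≤ n)
    (A : Fin (p + 2 * m) → Fin n → ℕ) (hA : memD p m n A)
    (β : Fin n → ℕ) (hβeven : Even (∑ j, β j))
    (I : Finset (Fin n)) (hI : I = Finset.univ.filter fun j => β j ≠ colSum A j)
    (hIn : I.card < n)
    (d : Fin (p + m) → Fin n → ℕ)
    (hd1 : ∀ (i : Fin (p + m)) (hi : (i : ℕ) < p) (j : Fin n),
      d i j = A ⟨i, by omega⟩ j)
    (hd2 : ∀ (i : Fin (p + m)) (hi : p ≤ (i : ℕ)) (j : Fin n),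
      d i j = A ⟨p + 2 * ((i : ℕ) - p), by have := i.isLt; omega⟩ j
            + A ⟨p + 2 * ((i : ℕ) - p) + 1, by have := i.isLt; omega⟩ j) :
    ∃ βv : Fin (p + m) → Fin n → ℕ,
      (∀ j, ∑ i, βv i j = β j) ∧
      (∀ i, Even (∑ j, βv i j)) ∧
      (∀ i : Fin (p + m), 1 ≤ (i : ℕ) →
        (Finset.univ.filter fun j : Fin n => βv i j ≠ d i j).card ≤ I.card + 1) ∧
      (Finset.univ.filter
          fun j : Fin n => βv ⟨0, hpm⟩ j ≠ d ⟨0, hpm⟩ j).card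
        ≤ I.card + p + m - 1 := by
  have hcol : ∑ i, d i = colSum A := by
    ext j
    rw [Finset.sum_apply]
    exact sum_blocks_eq_sum (a := (A · j)) (fun i => hd1 (Fin.castAdd m i) i.isLt j)
      fun k => by simpa [add_assoc] using hd2 (Fin.natAdd p k) (Nat.le_add_right p k) j
  have hdist : hammingDist β (∑ i, d i) = I.card := by rw [hcol, hI]; rfl
  obtain ⟨b, hsum, heven, hrow, hrow₀⟩ :=
    split_target_degrees_into_blocks_general d β hβeven ⟨0, hpm⟩
  rw [hdist] at hrow hrow₀
  rw [Fintype.card_fin, ← Nat.add_sub_assoc hpm, ← add_assoc] at hrow₀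
  exact ⟨b, fun j => by rw [← hsum, Finset.sum_apply], heven,
    fun i hi => hrow i (Fin.ne_of_val_ne (Nat.ne_of_gt hi)), hrow₀⟩
end
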